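/- Let n be a positive integer, let w be a random vector in ℝⁿ whose law is the product measure of n independent standard one-dimensional Gaussian measures N(0,1), let L be a real n×n matrix, let μ ∈ ℝⁿ, and set Σ = L·Lᵀ. Let A be a symmetric real n×n matrix and let q(w) = (μ + L·w)ᵀ A (μ + L·w). Then the variance of q equals 2·tr(AΣAΣ) + 4·μᵀAΣAμ; i.e. ∫ (q(w) − (tr(AΣ) + μᵀAμ))² dP(w) = 2·tr(A·Σ·A·Σ) + 4·μᵀ·A·Σ·A·μ. -/

import Mathlib

open MeasureTheory ProbabilityTheory Matrix

/-!
With `B = LᵀAL` and `c = 2LᵀAμ`, the form centred at its mean is `wᵀBw + cᵀw - tr B`. By rotation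
invariance, the coordinates of `w` in an orthonormal eigenbasis of `B` are again independent
standard Gaussians, so `wᵀBw + cᵀw` is a sum of independent variables `λᵢxᵢ² + cᵢxᵢ`, each of
variance `2λᵢ² + cᵢ²`, and the total is `2 tr(B²) + ‖c‖²`. The Gaussian moments needed for the
one-dimensional variance follow from the differential equation `dM/dt = v t M` satisfied by the
moment generating function of `N(0, v)`.
-/

open scoped NNReal RealInnerProductSpace

section RealGaussian

variable (v : ℝ≥0)

lemma integrable_pow_gaussianReal (k : ℕ) : Integrable (fun x ↦ x ^ k) (gaussianReal 0 v) :=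
  integrable_pow_of_mem_interior_integrableExpSet (X := id) (by simp) k

lemma integral_pow_gaussianReal_eq_iteratedDeriv (k : ℕ) :
    ∫ x, x ^ k ∂gaussianReal 0 v = iteratedDeriv k (fun t ↦ Real.exp (v * t ^ 2 / 2)) 0 := by
  have h := iteratedDeriv_mgf_zero (X := id) (μ := gaussianReal 0 v) (by simp) k
  simpa [mgf_id_gaussianReal] using h.symm

lemma integral_pow_add_two_gaussianReal (k : ℕ) :
    ∫ x, x ^ (k + 2) ∂gaussianReal 0 v = v * (k + 1) * ∫ x, x ^ k ∂gaussianReal 0 v := by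
  let M : ℝ → ℝ := fun t ↦ Real.exp (v * t ^ 2 / 2)
  have deriv_M : deriv M = fun t ↦ v * (t * M t) := by
    ext t
    have h := ((((hasDerivAt_id t).pow 2).const_mul (v : ℝ)).div_const 2).exp
    refine (h.congr_deriv ?_).deriv
    simp only [Pi.pow_apply, id_eq, Nat.cast_ofNat, Nat.add_one_sub_one, pow_one, mul_one, M]
    ring
  have contDiff_M : ContDiff ℝ (k + 1 : ℕ) M := by fun_prop
  have leibniz : iteratedDeriv (k + 1) (fun t ↦ t * M t) 0 = (k + 1) * iteratedDeriv k M 0 := by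
    rw [iteratedDeriv_fun_mul contDiffAt_fun_id contDiff_M.contDiffAt]
    simp [iteratedDeriv_fun_id_zero]
  calc ∫ x, x ^ (k + 2) ∂gaussianReal 0 v
      = iteratedDeriv (k + 1) (deriv M) 0 := by
        rw [integral_pow_gaussianReal_eq_iteratedDeriv, iteratedDeriv_succ']
    _ = v * ((k + 1) * iteratedDeriv k M 0) := by
        rw [deriv_M, iteratedDeriv_const_mul_field, leibniz]
    _ = v * (k + 1) * ∫ x, x ^ k ∂gaussianReal 0 v := by
        rw [integral_pow_gaussianReal_eq_iteratedDeriv, mul_assoc]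

lemma integral_sq_gaussianReal : ∫ x, x ^ 2 ∂gaussianReal 0 v = v := by
  simpa using integral_pow_add_two_gaussianReal v 0

lemma integral_pow_three_gaussianReal : ∫ x, x ^ 3 ∂gaussianReal 0 v = 0 := by
  simpa using integral_pow_add_two_gaussianReal v 1

lemma integral_pow_four_gaussianReal : ∫ x, x ^ 4 ∂gaussianReal 0 v = 3 * v ^ 2 := by
  rw [integral_pow_add_two_gaussianReal, integral_sq_gaussianReal]
  push_cast
  ring

lemma memLp_two_pow_gaussianReal (k : ℕ) : MemLp (fun x ↦ x ^ k) 2 (gaussianReal 0 v) := by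
  rw [memLp_two_iff_integrable_sq (by fun_prop)]
  simpa only [← pow_mul] using integrable_pow_gaussianReal v (k * 2)

variable (a b : ℝ)

lemma memLp_two_quadratic_gaussianReal :
    MemLp (fun x ↦ a * x ^ 2 + b * x) 2 (gaussianReal 0 v) := by
  simpa only [pow_one] using! ((memLp_two_pow_gaussianReal v 2).const_mul a).add
    ((memLp_two_pow_gaussianReal v 1).const_mul b)

lemma variance_quadratic_gaussianReal :
    Var[fun x ↦ a * x ^ 2 + b * x; gaussianReal 0 v] = 2 * a ^ 2 * v ^ 2 + b ^ 2 * v := by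
  have integrable_const_mul_pow (c : ℝ) (k : ℕ) :
      Integrable (fun x ↦ c * x ^ k) (gaussianReal 0 v) :=
    (integrable_pow_gaussianReal v k).const_mul c
  have first_moment : ∫ x, (a * x ^ 2 + b * x) ∂gaussianReal 0 v = a * v := by
    rw [integral_add (integrable_const_mul_pow a 2) (by simpa using integrable_const_mul_pow b 1),
      integral_const_mul, integral_const_mul, integral_sq_gaussianReal, integral_id_gaussianReal]
    ring
  have second_moment :
      ∫ x, (a * x ^ 2 + b * x) ^ 2 ∂gaussianReal 0 v = 3 * a ^ 2 * v ^ 2 + b ^ 2 * v := by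
    calc ∫ x, (a * x ^ 2 + b * x) ^ 2 ∂gaussianReal 0 v
        = ∫ x, (a ^ 2 * x ^ 4 + 2 * a * b * x ^ 3 + b ^ 2 * x ^ 2) ∂gaussianReal 0 v := by
          congr with x
          ring
      _ = 3 * a ^ 2 * v ^ 2 + b ^ 2 * v := by
          rw [integral_add ((integrable_const_mul_pow _ 4).fun_add (integrable_const_mul_pow _ 3))
              (integrable_const_mul_pow _ 2),
            integral_add (integrable_const_mul_pow _ 4) (integrable_const_mul_pow _ 3)]
          simp only [integral_const_mul, integral_sq_gaussianReal,
            integral_pow_three_gaussianReal, integral_pow_four_gaussianReal]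
          ring
  rw [variance_eq_sub (memLp_two_quadratic_gaussianReal v a b), first_moment]
  simp only [Pi.pow_apply, second_moment]
  ring

end RealGaussian

section StdGaussian

variable {E : Type*} [NormedAddCommGroup E] [InnerProductSpace ℝ E] [FiniteDimensional ℝ E]

lemma inner_apply_self_eq_sum_inner_mul_inner {ι : Type*} [Fintype ι]
    (b : OrthonormalBasis ι ℝ E) (T : E →ₗ[ℝ] E) (x : E) :
    ⟪x, T x⟫ = ∑ i, ⟪b i, x⟫ * ⟪T.adjoint (b i), x⟫ := by
  simp only [T.adjoint_inner_left, ← b.sum_inner_mul_inner x (T x), real_inner_comm x]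

variable [MeasurableSpace E] [BorelSpace E]

lemma integral_inner_mul_inner_stdGaussian (a b : E) :
    ∫ x, ⟪a, x⟫ * ⟪b, x⟫ ∂stdGaussian E = ⟪a, b⟫ := by
  have h := covarianceBilin_apply (μ := stdGaussian E) IsGaussian.memLp_two_id a b
  simpa [covarianceBilin_stdGaussian, innerSL_apply_apply ℝ] using h.symm

lemma memLp_two_inner_stdGaussian (a : E) : MemLp (fun x ↦ ⟪a, x⟫) 2 (stdGaussian E) :=
  IsGaussian.memLp_two_id.const_inner a

lemma integrable_inner_mul_inner_stdGaussian (a b : E) :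
    Integrable (fun x ↦ ⟪a, x⟫ * ⟪b, x⟫) (stdGaussian E) :=
  (memLp_two_inner_stdGaussian a).integrable_mul (memLp_two_inner_stdGaussian b)

lemma integral_inner_apply_self_stdGaussian (T : E →ₗ[ℝ] E) :
    ∫ x, ⟪x, T x⟫ ∂stdGaussian E = T.trace ℝ E := by
  let b := stdOrthonormalBasis ℝ E
  calc ∫ x, ⟪x, T x⟫ ∂stdGaussian E
      = ∑ i, ∫ x, ⟪b i, x⟫ * ⟪T.adjoint (b i), x⟫ ∂stdGaussian E := by
        simp only [inner_apply_self_eq_sum_inner_mul_inner b]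
        exact integral_finsetSum _ fun i _ ↦ integrable_inner_mul_inner_stdGaussian _ _
    _ = ∑ i, ⟪b i, T (b i)⟫ := by
        simp only [integral_inner_mul_inner_stdGaussian, T.adjoint_inner_right,
          real_inner_comm (b _)]
    _ = T.trace ℝ E := (T.trace_eq_sum_inner b).symm

lemma integral_inner_apply_self_add_inner_stdGaussian (T : E →ₗ[ℝ] E) (c : E) :
    ∫ x, (⟪x, T x⟫ + ⟪c, x⟫) ∂stdGaussian E = T.trace ℝ E := by
  have integrable_quadratic : Integrable (fun x ↦ ⟪x, T x⟫) (stdGaussian E) := by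
    simp only [inner_apply_self_eq_sum_inner_mul_inner (stdOrthonormalBasis ℝ E)]
    exact integrable_finsetSum _ fun i _ ↦ integrable_inner_mul_inner_stdGaussian _ _
  have integral_linear : ∫ x, ⟪c, x⟫ ∂stdGaussian E = 0 :=
    integral_strongDual_stdGaussian (innerSL ℝ c)
  rw [integral_add integrable_quadratic ((memLp_two_inner_stdGaussian c).integrable one_le_two),
    integral_inner_apply_self_stdGaussian, integral_linear, add_zero]

lemma variance_inner_apply_self_add_inner_stdGaussian {T : E →ₗ[ℝ] E} (hT : T.IsSymmetric)
    (c : E) :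
    Var[fun x ↦ ⟪x, T x⟫ + ⟪c, x⟫; stdGaussian E] = 2 * (T ∘ₗ T).trace ℝ E + ‖c‖ ^ 2 := by
  let b := hT.eigenvectorBasis rfl
  let eig := hT.eigenvalues rfl
  have apply_b : ∀ i, T (b i) = eig i • b i := hT.apply_eigenvectorBasis rfl
  have diagonalize : (fun x ↦ ⟪x, T x⟫ + ⟪c, x⟫) ∘ (fun w : _ → ℝ ↦ ∑ i, w i • b i) =
      ∑ i, fun w ↦ eig i * w i ^ 2 + ⟪c, b i⟫ * w i := by
    ext w
    have T_apply : T (∑ i, w i • b i) = ∑ i, (eig i * w i) • b i := by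
      simp only [map_sum, map_smul, apply_b, smul_smul, mul_comm]
    simp only [Function.comp_apply, T_apply, b.orthonormal.inner_sum, inner_sum, inner_smul_right,
      Finset.sum_apply, Finset.sum_add_distrib, conj_trivial]
    congr! 2 <;> ring
  have trace_sq : (T ∘ₗ T).trace ℝ E = ∑ i, eig i ^ 2 := by
    simp [LinearMap.trace_eq_sum_inner _ b, apply_b, inner_smul_right, sq]
  have T_cont : Continuous T := T.continuous_of_finiteDimensional
  rw [stdGaussian_eq_map_pi_orthonormalBasis b, variance_map (by fun_prop)
      (Measurable.aemeasurable (by fun_prop)), diagonalize,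
    variance_sum_pi (X := fun i x ↦ eig i * x ^ 2 + ⟪c, b i⟫ * x)
      fun i ↦ memLp_two_quadratic_gaussianReal 1 _ _]
  simp only [variance_quadratic_gaussianReal, trace_sq, ← b.sum_sq_inner_left c]
  simp [Finset.sum_add_distrib, Finset.mul_sum]

end StdGaussian

section Matrix

variable {ι κ : Type*} [Fintype ι] [Fintype κ]

lemma trace_toEuclideanLin {𝕜 : Type*} [RCLike 𝕜] [DecidableEq ι] (B : Matrix ι ι 𝕜) :
    (toEuclideanLin B).trace 𝕜 (EuclideanSpace 𝕜 ι) = B.trace := by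
  rw [toEuclideanLin_eq_toLin_orthonormal, trace_toLin_eq]

lemma integral_pi_gaussianReal_eq_stdGaussian {F : Type*} [NormedAddCommGroup F]
    [NormedSpace ℝ F] (f : EuclideanSpace ℝ ι → F) :
    ∫ w, f (WithLp.toLp 2 w) ∂(Measure.pi fun _ : ι ↦ gaussianReal 0 1) =
      ∫ x, f x ∂stdGaussian (EuclideanSpace ℝ ι) := by
  rw [← map_pi_eq_stdGaussian]
  exact (integral_map_equiv (MeasurableEquiv.toLp 2 (ι → ℝ)) f).symm

lemma integral_sq_centered_quadraticForm_pi_gaussianReal {B : Matrix ι ι ℝ} (hB : B.IsSymm)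
    (c : ι → ℝ) :
    ∫ w, (w ⬝ᵥ B *ᵥ w + c ⬝ᵥ w - B.trace) ^ 2 ∂(Measure.pi fun _ : ι ↦ gaussianReal 0 1) =
      2 * (B * B).trace + c ⬝ᵥ c := by
  classical
  let T := toEuclideanLin B
  have hT : T.IsSymmetric := isSymmetric_toEuclideanLin_iff.2 (by simpa [IsHermitian] using hB.eq)
  have inner_toLp (x y : ι → ℝ) : ⟪WithLp.toLp 2 x, WithLp.toLp 2 y⟫ = x ⬝ᵥ y := by
    simp [EuclideanSpace.inner_toLp_toLp, dotProduct_comm]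
  calc ∫ w, (w ⬝ᵥ B *ᵥ w + c ⬝ᵥ w - B.trace) ^ 2 ∂(Measure.pi fun _ : ι ↦ gaussianReal 0 1)
      = ∫ x, (⟪x, T x⟫ + ⟪WithLp.toLp 2 c, x⟫ - T.trace ℝ (EuclideanSpace ℝ ι)) ^ 2
          ∂stdGaussian (EuclideanSpace ℝ ι) := by
        rw [← integral_pi_gaussianReal_eq_stdGaussian]
        simp only [T, toLpLin_toLp, toLin'_apply, inner_toLp, trace_toEuclideanLin]
    _ = Var[fun x ↦ ⟪x, T x⟫ + ⟪WithLp.toLp 2 c, x⟫; stdGaussian (EuclideanSpace ℝ ι)] := by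
        rw [variance_eq_integral (by fun_prop), integral_inner_apply_self_add_inner_stdGaussian]
    _ = 2 * (B * B).trace + c ⬝ᵥ c := by
        rw [variance_inner_apply_self_add_inner_stdGaussian hT, ← toLpLin_mul_same,
          trace_toEuclideanLin, ← real_inner_self_eq_norm_sq, inner_toLp]

lemma dotProduct_mulVec_self_add_mulVec {R : Type*} [CommRing R] {A : Matrix ι ι R}
    (hA : A.IsSymm) (L : Matrix ι κ R) (x : ι → R) (w : κ → R) :
    (x + L *ᵥ w) ⬝ᵥ A *ᵥ (x + L *ᵥ w) =
      x ⬝ᵥ A *ᵥ x + (w ⬝ᵥ (Lᵀ * A * L) *ᵥ w + ((2 : R) • Lᵀ *ᵥ A *ᵥ x) ⬝ᵥ w) := by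
  have cross : x ⬝ᵥ A *ᵥ (L *ᵥ w) = (L *ᵥ w) ⬝ᵥ A *ᵥ x := by
    rw [← dotProduct_transpose_mulVec, hA.eq]
  have pull_back (y : ι → R) : (L *ᵥ w) ⬝ᵥ y = w ⬝ᵥ Lᵀ *ᵥ y := by
    rw [dotProduct_transpose_mulVec, dotProduct_comm]
  rw [dotProduct_comm _ w]
  simp only [mulVec_add, add_dotProduct, dotProduct_add, cross, pull_back, ← mulVec_mulVec,
    dotProduct_smul, smul_eq_mul]
  ring

theorem variance_gaussian_quadratic_form_general (L : Matrix ι κ ℝ) (μ : ι → ℝ)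
    {A : Matrix ι ι ℝ} (hA : A.IsSymm) :
    ∫ w, ((μ + L *ᵥ w) ⬝ᵥ A *ᵥ (μ + L *ᵥ w) - ((A * (L * Lᵀ)).trace + μ ⬝ᵥ A *ᵥ μ)) ^ 2
        ∂(Measure.pi fun _ : κ ↦ gaussianReal 0 1) =
      2 * (A * (L * Lᵀ) * A * (L * Lᵀ)).trace + 4 * (μ ⬝ᵥ (A * (L * Lᵀ) * A) *ᵥ μ) := by
  let B : Matrix κ κ ℝ := Lᵀ * A * L
  let c : κ → ℝ := (2 : ℝ) • Lᵀ *ᵥ A *ᵥ μ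
  have hB : B.IsSymm := by simp [B, Matrix.IsSymm, hA.eq, Matrix.mul_assoc]
  have trace_B : B.trace = (A * (L * Lᵀ)).trace := by
    rw [Matrix.trace_mul_cycle, Matrix.trace_mul_comm]
  have trace_B_sq : (B * B).trace = (A * (L * Lᵀ) * A * (L * Lᵀ)).trace := by
    simp only [B, Matrix.mul_assoc]
    rw [Matrix.trace_mul_comm]
    simp only [Matrix.mul_assoc]
  have c_dotProduct_self : c ⬝ᵥ c = 4 * (μ ⬝ᵥ (A * (L * Lᵀ) * A) *ᵥ μ) := by
    have norm_sq : (Lᵀ *ᵥ A *ᵥ μ) ⬝ᵥ (Lᵀ *ᵥ A *ᵥ μ) = μ ⬝ᵥ (A * (L * Lᵀ) * A) *ᵥ μ := by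
      rw [dotProduct_transpose_mulVec, dotProduct_comm, ← dotProduct_transpose_mulVec, hA.eq]
      simp only [mulVec_mulVec, Matrix.mul_assoc]
    simp only [c, smul_dotProduct, dotProduct_smul, smul_eq_mul, norm_sq]
    ring
  rw [← trace_B_sq, ← c_dotProduct_self, ← integral_sq_centered_quadraticForm_pi_gaussianReal hB c]
  simp only [dotProduct_mulVec_self_add_mulVec hA, trace_B, add_comm _ (μ ⬝ᵥ A *ᵥ μ),
    add_sub_add_left_eq_sub, B, c]

end Matrix

/-- Variance of a Gaussian quadratic form: for a Gaussian vector
`z = μ + L·w` with `w` standard Gaussian and `Σ = L·Lᵀ`,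
`Var[zᵀAz] = 2 tr(AΣAΣ) + 4 μᵀAΣAμ` for symmetric `A`. -/
theorem variance_gaussian_quadratic_form
    (n : ℕ) (hn : 0 < n)
    (L : Matrix (Fin n) (Fin n) ℝ) (μ : Fin n → ℝ)
    (A : Matrix (Fin n) (Fin n) ℝ) (hA : A.IsSymm) :
    ∫ w : Fin n → ℝ,
        ((μ + L.mulVec w) ⬝ᵥ A.mulVec (μ + L.mulVec w)
          - ((A * (L * Lᵀ)).trace + μ ⬝ᵥ A.mulVec μ)) ^ 2
        ∂(Measure.pi fun _ : Fin n => gaussianReal 0 1)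
      = 2 * (A * (L * Lᵀ) * A * (L * Lᵀ)).trace
        + 4 * (μ ⬝ᵥ (A * (L * Lᵀ) * A).mulVec μ) :=
  variance_gaussian_quadratic_form_general L μ hA
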